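/- Let μ be a positive Borel measure on ℂ and k ∈ ℕ. If sup_{z∈ℂ} μ(B(z,r)) · (1+|z|²)^k < ∞ for some r > 0, then there exists a constant ϖ such that for all f ∈ F²(ℂ): ∫_ℂ |f^{(k)}(z)|² e^{-|z|²} dμ(z) ≤ ϖ · ‖f‖²_{F²}. -/

import Mathlib

open MeasureTheory Complex Real Filter

/-- The Gaussian-weighted square integrand for the Fock space. -/
noncomputable def fockIntegrand (f : ℂ → ℂ) (z : ℂ) : ℝ := ‖f z‖ ^ 2 * Real.exp (-‖z‖ ^ 2)

/-- The squared Fock norm: π⁻¹ ∫ |f|² e^{-|z|²} dV. -/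
noncomputable def fockNormSq (f : ℂ → ℂ) : ℝ := π⁻¹ * ∫ z : ℂ, fockIntegrand f z

/-- Membership in the Fock space F²(ℂ): entire and Gaussian square-integrable. -/
def MemFock (f : ℂ → ℂ) : Prop := Differentiable ℂ f ∧ Integrable (fockIntegrand f)

/-!
Multiplying an entire function by `exp (‖w‖² / 2 - conj w * u)` turns the Gaussian weight
`exp (-‖u‖²)` into `exp (-‖u - w‖²)`, which is bounded below near `w`. The mean value property over
discs therefore controls `|f w|² exp (-‖w‖²)` by the Fock mass of `f` near `w`. Over a circle around
`z` of radius of order `(1 + ‖z‖²)^(-1/2)` the Gaussian weight varies by a bounded factor only, so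
Cauchy's estimate there costs a factor `(1 + ‖z‖²)^k` for the square of the `k`-th derivative.
Integrating against `μ` and exchanging the integrals leaves the `μ`-integral of `(1 + ‖z‖²)^k` over
discs of radius `r`, on each of which that weight is essentially constant.
-/

open Metric
open scoped ENNReal NNReal

section MeanValue

variable {E : Type*} [NormedAddCommGroup E] [NormedSpace ℂ E] [CompleteSpace E]

theorem enorm_center_le_lintegral_circleMap {h : ℂ → E} {c : ℂ} {R : ℝ}
    (hh : DiffContOnCl ℂ h (ball c |R|)) :
    ENNReal.ofReal (2 * π) * ‖h c‖ₑ ≤ ∫⁻ θ in Set.Ioc 0 (2 * π), ‖h (circleMap c R θ)‖ₑ := by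
  have hmean : (2 * π) • h c = ∫ θ in Set.Ioc 0 (2 * π), h (circleMap c R θ) := by
    rw [← hh.circleAverage, circleAverage_def, smul_inv_smul₀ two_pi_pos.ne',
      intervalIntegral.integral_of_le two_pi_pos.le]
  rw [← Real.enorm_of_nonneg two_pi_pos.le, ← enorm_smul, hmean]
  exact enorm_integral_le_lintegral_enorm _

theorem setLIntegral_ball_comp_add_rotation (a : Circle) (c : ℂ) (R : ℝ) (g : ℂ → ℝ≥0∞) :
    ∫⁻ u in ball 0 R, g (c + a * u) = ∫⁻ u in ball c R, g u := by
  have hmp : MeasurePreserving (fun u : ℂ ↦ c + a * u) :=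
    (measurePreserving_add_left volume c).comp (rotation a).measurePreserving
  have hemb : MeasurableEmbedding fun u : ℂ ↦ c + a * u :=
    (measurableEmbedding_addLeft c).comp (rotation a).toHomeomorph.measurableEmbedding
  have hball : (fun u : ℂ ↦ c + a * u) ⁻¹' ball c R = ball 0 R := by
    ext u
    simp [dist_eq_norm, Circle.norm_coe]
  rw [← hball, hmp.setLIntegral_comp_preimage_emb hemb]

theorem add_mul_mem_ball {c u v : ℂ} {R : ℝ} (hu : ‖u‖ < R) (hv : ‖v‖ ≤ 1) :
    c + v * u ∈ ball c R := by
  simpa [dist_eq_norm] using (mul_le_of_le_one_left (norm_nonneg u) hv).trans_lt hu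

theorem enorm_center_le_lintegral_rotation {h : ℂ → E} {c u : ℂ} {R : ℝ}
    (hh : DifferentiableOn ℂ h (ball c R)) (hu : ‖u‖ < R) :
    ENNReal.ofReal (2 * π) * ‖h c‖ₑ ≤
      ∫⁻ θ in Set.Ioc 0 (2 * π), ‖h (c + Circle.exp θ * u)‖ₑ := by
  have hdiff : DifferentiableOn ℂ (fun v ↦ h (c + v * u)) (closedBall 0 1) :=
    hh.comp (by fun_prop) fun v hv ↦ add_mul_mem_ball hu (mem_closedBall_zero_iff.1 hv)
  have hcont : DiffContOnCl ℂ (fun v ↦ h (c + v * u)) (ball 0 |1|) :=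
    hdiff.diffContOnCl_ball (by rw [abs_one])
  simpa [circleMap] using enorm_center_le_lintegral_circleMap hcont

theorem volume_ball_mul_enorm_center_le {h : ℂ → E} {c : ℂ} {R : ℝ}
    (hh : DifferentiableOn ℂ h (ball c R)) :
    volume (ball c R) * ‖h c‖ₑ ≤ ∫⁻ u in ball c R, ‖h u‖ₑ := by
  -- Averaging over all rotations of the disc reduces the claim to the mean value over circles.
  have hmeas : AEMeasurable (fun p : ℂ × ℝ ↦ ‖h (c + Circle.exp p.2 * p.1)‖ₑ)
      ((volume.restrict (ball 0 R)).prod (volume.restrict (Set.Ioc 0 (2 * π)))) := by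
    rw [Measure.prod_restrict]
    refine (ContinuousOn.enorm (hh.continuousOn.comp (by fun_prop) ?_)).aemeasurable
      (measurableSet_ball.prod measurableSet_Ioc)
    exact fun p hp ↦ add_mul_mem_ball (mem_ball_zero_iff.1 hp.1) (Circle.norm_coe _).le
  have htwo_pi : ENNReal.ofReal (2 * π) ≠ 0 := by simp [pi_pos]
  rw [← ENNReal.mul_le_mul_iff_right htwo_pi ENNReal.ofReal_ne_top]
  calc ENNReal.ofReal (2 * π) * (volume (ball c R) * ‖h c‖ₑ)
      = ∫⁻ _ in ball (0 : ℂ) R, ENNReal.ofReal (2 * π) * ‖h c‖ₑ := by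
        rw [setLIntegral_const, Complex.volume_ball, Complex.volume_ball]
        ring
    _ ≤ ∫⁻ u in ball 0 R, ∫⁻ θ in Set.Ioc 0 (2 * π), ‖h (c + Circle.exp θ * u)‖ₑ :=
        setLIntegral_mono' measurableSet_ball fun u hu ↦
          enorm_center_le_lintegral_rotation hh (mem_ball_zero_iff.1 hu)
    _ = ∫⁻ θ in Set.Ioc 0 (2 * π), ∫⁻ u in ball 0 R, ‖h (c + Circle.exp θ * u)‖ₑ :=
        lintegral_lintegral_swap hmeas
    _ = ENNReal.ofReal (2 * π) * ∫⁻ u in ball c R, ‖h u‖ₑ := by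
        simp_rw [fun θ ↦ setLIntegral_ball_comp_add_rotation (Circle.exp θ) c R (‖h ·‖ₑ)]
        rw [setLIntegral_const, Real.volume_Ioc, sub_zero, mul_comm]

end MeanValue

section Fock

theorem fockIntegrand_nonneg (f : ℂ → ℂ) (z : ℂ) : 0 ≤ fockIntegrand f z := by
  unfold fockIntegrand
  positivity

theorem fockNormSq_nonneg (f : ℂ → ℂ) : 0 ≤ fockNormSq f :=
  mul_nonneg (inv_nonneg.2 pi_pos.le) (integral_nonneg (fockIntegrand_nonneg f))

theorem continuous_fockIntegrand {f : ℂ → ℂ} (hf : Continuous f) :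
    Continuous (fockIntegrand f) := by
  unfold fockIntegrand
  fun_prop

theorem norm_sq_eq_fockIntegrand_mul_exp (f : ℂ → ℂ) (z : ℂ) :
    ‖f z‖ ^ 2 = fockIntegrand f z * Real.exp (‖z‖ ^ 2) := by
  rw [fockIntegrand, mul_assoc, ← Real.exp_add, neg_add_cancel, Real.exp_zero, mul_one]

theorem MemFock.lintegral_fockIntegrand {f : ℂ → ℂ} (hf : MemFock f) :
    ∫⁻ z, ENNReal.ofReal (fockIntegrand f z) = ENNReal.ofReal (π * fockNormSq f) := by
  rw [fockNormSq, mul_inv_cancel_left₀ pi_ne_zero,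
    ofReal_integral_eq_lintegral_ofReal hf.2 (.of_forall (fockIntegrand_nonneg f))]

theorem norm_mul_cexp_sq_eq_fockIntegrand_mul_exp (f : ℂ → ℂ) (w u : ℂ) :
    ‖(f u * cexp (‖w‖ ^ 2 / 2 - starRingEnd ℂ w * u)) ^ 2‖ =
      fockIntegrand f u * Real.exp (‖u - w‖ ^ 2) := by
  have hre : (‖w‖ ^ 2 / 2 - starRingEnd ℂ w * u : ℂ).re * 2 = -‖u‖ ^ 2 + ‖u - w‖ ^ 2 := by
    simp only [← Complex.normSq_eq_norm_sq, ← Complex.ofReal_pow, Complex.normSq_apply]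
    simp only [ofReal_add, ofReal_mul, sub_re, div_ofNat_re, add_re, mul_re, ofReal_re, ofReal_im,
      mul_zero, sub_zero, conj_re, conj_im, neg_mul, sub_neg_eq_add, neg_add_rev, sub_im]
    ring
  rw [norm_pow, norm_mul, mul_pow, Complex.norm_exp, ← Real.exp_nat_mul, Nat.cast_ofNat,
    mul_comm 2, hre, Real.exp_add, fockIntegrand, mul_assoc]

theorem volume_ball_mul_fockIntegrand_le {f : ℂ → ℂ} {w : ℂ} {R : ℝ}
    (hf : DifferentiableOn ℂ f (ball w R)) :
    volume (ball w R) * ENNReal.ofReal (fockIntegrand f w) ≤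
      ENNReal.ofReal (Real.exp (R ^ 2)) * ∫⁻ u in ball w R, ENNReal.ofReal (fockIntegrand f u) := by
  let h : ℂ → ℂ := fun u ↦ (f u * cexp (‖w‖ ^ 2 / 2 - starRingEnd ℂ w * u)) ^ 2
  have hnorm (u : ℂ) : ‖h u‖ₑ = ENNReal.ofReal (fockIntegrand f u * Real.exp (‖u - w‖ ^ 2)) := by
    rw [← ofReal_norm, norm_mul_cexp_sq_eq_fockIntegrand_mul_exp]
  calc volume (ball w R) * ENNReal.ofReal (fockIntegrand f w)
      = volume (ball w R) * ‖h w‖ₑ := by simp [hnorm]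
    _ ≤ ∫⁻ u in ball w R, ‖h u‖ₑ := volume_ball_mul_enorm_center_le (by fun_prop)
    _ ≤ ∫⁻ u in ball w R,
          ENNReal.ofReal (Real.exp (R ^ 2)) * ENNReal.ofReal (fockIntegrand f u) := by
        refine setLIntegral_mono' measurableSet_ball fun u hu ↦ ?_
        have hu' : ‖u - w‖ ≤ R := (mem_ball_iff_norm.1 hu).le
        rw [hnorm, ← ENNReal.ofReal_mul (by positivity), mul_comm]
        gcongr
        exact fockIntegrand_nonneg f u
    _ = _ := lintegral_const_mul' _ _ ENNReal.ofReal_ne_top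

theorem exists_fockIntegrand_le_mul_setLIntegral_ball {R : ℝ} (hR : 0 < R) :
    ∃ C : ℝ≥0, ∀ (f : ℂ → ℂ) (w : ℂ), DifferentiableOn ℂ f (ball w R) →
      ENNReal.ofReal (fockIntegrand f w) ≤
        C * ∫⁻ u in ball w R, ENNReal.ofReal (fockIntegrand f u) := by
  let V : ℝ≥0∞ := volume (ball (0 : ℂ) R)
  have hV : V ≠ 0 := (measure_ball_pos volume 0 hR).ne'
  have hV_top : V ≠ ⊤ := measure_ball_lt_top.ne
  refine ⟨(ENNReal.ofReal (Real.exp (R ^ 2)) / V).toNNReal, fun f w hf ↦ ?_⟩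
  have hvol : volume (ball w R) = V := Measure.addHaar_ball_center volume w R
  rw [ENNReal.coe_toNNReal (ENNReal.div_ne_top ENNReal.ofReal_ne_top hV),
    ← ENNReal.mul_div_right_comm, ENNReal.le_div_iff_mul_le (.inl hV) (.inl hV_top), mul_comm,
    ← hvol]
  exact volume_ball_mul_fockIntegrand_le hf

theorem fockIntegrand_iteratedDeriv_le_of_forall_mem_sphere (k : ℕ) {f : ℂ → ℂ} {z : ℂ} {s B : ℝ}
    (hs : 0 < s) (hf : DiffContOnCl ℂ f (ball z s))
    (hB : ∀ w ∈ sphere z s, fockIntegrand f w ≤ B) :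
    fockIntegrand (iteratedDeriv k f) z ≤
      (k.factorial / s ^ k) ^ 2 * Real.exp (2 * (s * ‖z‖) + s ^ 2) * B := by
  obtain ⟨w₀, hw₀⟩ := (NormedSpace.sphere_nonempty (x := z)).2 hs.le
  have hB₀ : 0 ≤ B := (fockIntegrand_nonneg f w₀).trans (hB w₀ hw₀)
  have hbound (w : ℂ) (hw : w ∈ sphere z s) :
      ‖f w‖ ≤ √(B * Real.exp ((‖z‖ + s) ^ 2)) := by
    have hwz : ‖w‖ ≤ ‖z‖ + s := by
      simpa [mem_sphere_iff_norm.1 hw] using norm_le_norm_add_norm_sub' w z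
    apply Real.le_sqrt_of_sq_le
    rw [norm_sq_eq_fockIntegrand_mul_exp]
    gcongr
    exact hB w hw
  have hcauchy := Complex.norm_iteratedDeriv_le_of_forall_mem_sphere_norm_le k hs hf hbound
  calc fockIntegrand (iteratedDeriv k f) z
      ≤ (k.factorial * √(B * Real.exp ((‖z‖ + s) ^ 2)) / s ^ k) ^ 2 * Real.exp (-‖z‖ ^ 2) := by
        unfold fockIntegrand
        gcongr
    _ = (k.factorial / s ^ k) ^ 2 * B * (Real.exp ((‖z‖ + s) ^ 2) * Real.exp (-‖z‖ ^ 2)) := by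
        rw [div_pow, mul_pow, Real.sq_sqrt (by positivity)]
        ring
    _ = (k.factorial / s ^ k) ^ 2 * Real.exp (2 * (s * ‖z‖) + s ^ 2) * B := by
        rw [← Real.exp_add]
        ring_nf

theorem fockIntegrand_iteratedDeriv_le_of_forall_mem_closedBall (k : ℕ) {f : ℂ → ℂ} {z : ℂ}
    {ρ B : ℝ} (hρ : 0 < ρ) (hf : DifferentiableOn ℂ f (closedBall z ρ))
    (hB : ∀ w ∈ closedBall z ρ, fockIntegrand f w ≤ B) :
    fockIntegrand (iteratedDeriv k f) z ≤
      (k.factorial / ρ ^ k) ^ 2 * Real.exp (2 * ρ + ρ ^ 2) * (1 + ‖z‖ ^ 2) ^ k * B := by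
  obtain ⟨s, hs, hs_sq⟩ : ∃ s : ℝ, 0 < s ∧ s ^ 2 * (1 + ‖z‖ ^ 2) = ρ ^ 2 := by
    refine ⟨ρ / √(1 + ‖z‖ ^ 2), by positivity, ?_⟩
    rw [div_pow, Real.sq_sqrt (by positivity), div_mul_cancel₀ _ (by positivity)]
  have hsρ : s ≤ ρ := (sq_le_sq₀ hs.le hρ.le).1 (by nlinarith [sq_nonneg (s * ‖z‖)])
  have hszρ : s * ‖z‖ ≤ ρ := (sq_le_sq₀ (by positivity) hρ.le).1 (by nlinarith [sq_nonneg s])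
  have hB₀ : 0 ≤ B := (fockIntegrand_nonneg f z).trans (hB z (mem_closedBall_self hρ.le))
  have hpow : (k.factorial / s ^ k : ℝ) ^ 2 = (k.factorial / ρ ^ k) ^ 2 * (1 + ‖z‖ ^ 2) ^ k := by
    have hpow' : (s ^ k) ^ 2 * (1 + ‖z‖ ^ 2) ^ k = (ρ ^ k) ^ 2 := by
      rw [pow_right_comm, ← mul_pow, hs_sq, pow_right_comm]
    rw [div_pow, div_pow, ← hpow']
    field_simp
  calc fockIntegrand (iteratedDeriv k f) z
      ≤ (k.factorial / s ^ k) ^ 2 * Real.exp (2 * (s * ‖z‖) + s ^ 2) * B :=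
        fockIntegrand_iteratedDeriv_le_of_forall_mem_sphere k hs
          (hf.diffContOnCl_ball (closedBall_subset_closedBall hsρ))
          fun w hw ↦ hB w (closedBall_subset_closedBall hsρ (sphere_subset_closedBall hw))
    _ ≤ (k.factorial / s ^ k) ^ 2 * Real.exp (2 * ρ + ρ ^ 2) * B := by gcongr
    _ = _ := by rw [hpow]; ring

theorem ofReal_fockIntegrand_iteratedDeriv_le_of_forall_mem_closedBall (k : ℕ) {f : ℂ → ℂ} {z : ℂ}
    {ρ : ℝ} {B : ℝ≥0∞} (hρ : 0 < ρ) (hf : DifferentiableOn ℂ f (closedBall z ρ))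
    (hB : ∀ w ∈ closedBall z ρ, ENNReal.ofReal (fockIntegrand f w) ≤ B) :
    ENNReal.ofReal (fockIntegrand (iteratedDeriv k f) z) ≤
      ENNReal.ofReal ((k.factorial / ρ ^ k) ^ 2 * Real.exp (2 * ρ + ρ ^ 2) * (1 + ‖z‖ ^ 2) ^ k) *
        B := by
  obtain rfl | hB_top := eq_or_ne B ⊤
  · rw [ENNReal.mul_top (by simp only [ne_eq, ENNReal.ofReal_eq_zero, not_le]; positivity)]
    exact le_top
  · rw [← ENNReal.ofReal_toReal hB_top, ← ENNReal.ofReal_mul (by positivity)]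
    refine ENNReal.ofReal_le_ofReal ?_
    exact fockIntegrand_iteratedDeriv_le_of_forall_mem_closedBall k hρ hf
      fun w hw ↦ (ENNReal.ofReal_le_iff_le_toReal hB_top).1 (hB w hw)

theorem exists_fockIntegrand_iteratedDeriv_le (k : ℕ) {r : ℝ} (hr : 0 < r) :
    ∃ C : ℝ≥0, ∀ (f : ℂ → ℂ) (z : ℂ), DifferentiableOn ℂ f (ball z r) →
      ENNReal.ofReal (fockIntegrand (iteratedDeriv k f) z) ≤
        C * (ENNReal.ofReal ((1 + ‖z‖ ^ 2) ^ k) *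
          ∫⁻ u in ball z r, ENNReal.ofReal (fockIntegrand f u)) := by
  obtain ⟨A, hA⟩ := exists_fockIntegrand_le_mul_setLIntegral_ball (half_pos hr)
  let K : ℝ := (k.factorial / (r / 2) ^ k) ^ 2 * Real.exp (2 * (r / 2) + (r / 2) ^ 2)
  refine ⟨K.toNNReal * A, fun f z hf ↦ ?_⟩
  have hball {w : ℂ} (hw : w ∈ closedBall z (r / 2)) : ball w (r / 2) ⊆ ball z r :=
    ball_subset_ball' (by linarith [mem_closedBall.1 hw])
  have hlocal (w : ℂ) (hw : w ∈ closedBall z (r / 2)) :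
      ENNReal.ofReal (fockIntegrand f w) ≤
        A * ∫⁻ u in ball z r, ENNReal.ofReal (fockIntegrand f u) := by
    grw [hA f w (hf.mono (hball hw)), hball hw]
  have hdiff : DifferentiableOn ℂ f (closedBall z (r / 2)) :=
    hf.mono (closedBall_subset_ball (half_lt_self hr))
  refine (ofReal_fockIntegrand_iteratedDeriv_le_of_forall_mem_closedBall k (half_pos hr) hdiff
    hlocal).trans_eq ?_
  rw [ENNReal.ofReal_mul (by positivity), ENNReal.coe_mul, ENNReal.ofNNReal_toNNReal]
  ring

end Fock

section Carleson

theorem lintegral_mul_setLIntegral_ball_le {X : Type*} [PseudoMetricSpace X]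
    [SecondCountableTopology X] [MeasurableSpace X] [OpensMeasurableSpace X] {μ ν : Measure X}
    [SFinite μ] [SFinite ν] {w g : X → ℝ≥0∞} (hw : Measurable w) (hg : Measurable g) {r : ℝ}
    {K : ℝ≥0∞} (hK : ∀ u, ∫⁻ z in ball u r, w z ∂μ ≤ K) :
    ∫⁻ z, w z * ∫⁻ u in ball z r, g u ∂ν ∂μ ≤ K * ∫⁻ u, g u ∂ν := by
  let G : X × X → ℝ≥0∞ := {p | dist p.2 p.1 < r}.indicator fun p ↦ w p.1 * g p.2
  have hG : Measurable G :=
    ((hw.comp measurable_fst).mul (hg.comp measurable_snd)).indicator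
      (isOpen_lt (by fun_prop) (by fun_prop)).measurableSet
  have hG_left (z : X) : ∫⁻ u, G (z, u) ∂ν = w z * ∫⁻ u in ball z r, g u ∂ν := by
    rw [← lintegral_const_mul _ hg, ← lintegral_indicator measurableSet_ball]
    rfl
  have hG_right (u : X) : ∫⁻ z, G (z, u) ∂μ = (∫⁻ z in ball u r, w z ∂μ) * g u := by
    have hball : ball u r = {z | dist u z < r} := Set.ext fun _ ↦ mem_ball'
    rw [← lintegral_mul_const _ hw, ← lintegral_indicator measurableSet_ball, hball]
    rfl
  calc ∫⁻ z, w z * ∫⁻ u in ball z r, g u ∂ν ∂μ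
      = ∫⁻ z, ∫⁻ u, G (z, u) ∂ν ∂μ := by simp only [hG_left]
    _ = ∫⁻ u, (∫⁻ z in ball u r, w z ∂μ) * g u ∂ν := by
        simp only [← hG_right]
        exact lintegral_lintegral_swap hG.aemeasurable
    _ ≤ ∫⁻ u, K * g u ∂ν := lintegral_mono fun u ↦ mul_le_mul_left (hK u) _
    _ = K * ∫⁻ u, g u ∂ν := lintegral_const_mul _ hg

theorem one_add_norm_sq_le {E : Type*} [SeminormedAddCommGroup E] (x y : E) :
    1 + ‖x‖ ^ 2 ≤ 2 * (1 + ‖x - y‖ ^ 2) * (1 + ‖y‖ ^ 2) := by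
  have htri : ‖x‖ ≤ ‖x - y‖ + ‖y‖ := by simpa using norm_add_le (x - y) y
  calc 1 + ‖x‖ ^ 2 ≤ 1 + 2 * (‖x - y‖ ^ 2 + ‖y‖ ^ 2) := by
        grw [htri, add_sq_le]
    _ ≤ 2 * (1 + ‖x - y‖ ^ 2) * (1 + ‖y‖ ^ 2) := by
        nlinarith [mul_nonneg (sq_nonneg ‖x - y‖) (sq_nonneg ‖y‖)]

theorem setLIntegral_ball_one_add_norm_sq_pow_le {E : Type*} [SeminormedAddCommGroup E]
    [MeasurableSpace E] [OpensMeasurableSpace E] (μ : Measure E) (k : ℕ) (r : ℝ) (u : E) :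
    ∫⁻ z in ball u r, ENNReal.ofReal ((1 + ‖z‖ ^ 2) ^ k) ∂μ ≤
      ENNReal.ofReal ((2 * (1 + r ^ 2)) ^ k) *
        (μ (ball u r) * ENNReal.ofReal ((1 + ‖u‖ ^ 2) ^ k)) := by
  have hpoint (z : E) (hz : z ∈ ball u r) :
      (1 + ‖z‖ ^ 2) ^ k ≤ (2 * (1 + r ^ 2)) ^ k * (1 + ‖u‖ ^ 2) ^ k := by
    have hzu : ‖z - u‖ ≤ r := (mem_ball_iff_norm.1 hz).le
    rw [← mul_pow]
    grw [one_add_norm_sq_le z u, hzu]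
  calc ∫⁻ z in ball u r, ENNReal.ofReal ((1 + ‖z‖ ^ 2) ^ k) ∂μ
      ≤ ∫⁻ _ in ball u r, ENNReal.ofReal ((2 * (1 + r ^ 2)) ^ k * (1 + ‖u‖ ^ 2) ^ k) ∂μ :=
        setLIntegral_mono' measurableSet_ball fun z hz ↦ ENNReal.ofReal_le_ofReal (hpoint z hz)
    _ = _ := by
        rw [setLIntegral_const, ENNReal.ofReal_mul (by positivity), mul_assoc,
          mul_comm (ENNReal.ofReal _) (μ _)]

theorem exists_lintegral_fockIntegrand_iteratedDeriv_le (k : ℕ) {r : ℝ} (hr : 0 < r) :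
    ∃ C : ℝ≥0, ∀ (μ : Measure ℂ) [SFinite μ] (K : ℝ≥0∞),
      (∀ z, μ (ball z r) * ENNReal.ofReal ((1 + ‖z‖ ^ 2) ^ k) ≤ K) →
      ∀ f : ℂ → ℂ, Differentiable ℂ f →
        ∫⁻ z, ENNReal.ofReal (fockIntegrand (iteratedDeriv k f) z) ∂μ ≤
          C * K * ∫⁻ u, ENNReal.ofReal (fockIntegrand f u) := by
  obtain ⟨C, hC⟩ := exists_fockIntegrand_iteratedDeriv_le k hr
  let D : ℝ := (2 * (1 + r ^ 2)) ^ k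
  refine ⟨C * D.toNNReal, fun μ _ K hK f hf ↦ ?_⟩
  have hweight (u : ℂ) : ∫⁻ z in ball u r, ENNReal.ofReal ((1 + ‖z‖ ^ 2) ^ k) ∂μ ≤
      ENNReal.ofReal D * K := by
    grw [setLIntegral_ball_one_add_norm_sq_pow_le, hK u]
  have hmeas : Measurable fun u ↦ ENNReal.ofReal (fockIntegrand f u) :=
    (continuous_fockIntegrand hf.continuous).measurable.ennreal_ofReal
  calc ∫⁻ z, ENNReal.ofReal (fockIntegrand (iteratedDeriv k f) z) ∂μ
      ≤ ∫⁻ z, C * (ENNReal.ofReal ((1 + ‖z‖ ^ 2) ^ k) *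
          ∫⁻ u in ball z r, ENNReal.ofReal (fockIntegrand f u)) ∂μ :=
        lintegral_mono fun z ↦ hC f z hf.differentiableOn
    _ = C * ∫⁻ z, ENNReal.ofReal ((1 + ‖z‖ ^ 2) ^ k) *
          ∫⁻ u in ball z r, ENNReal.ofReal (fockIntegrand f u) ∂volume ∂μ :=
        lintegral_const_mul' _ _ ENNReal.coe_ne_top
    _ ≤ C * (ENNReal.ofReal D * K * ∫⁻ u, ENNReal.ofReal (fockIntegrand f u)) := by
        grw [lintegral_mul_setLIntegral_ball_le (by fun_prop) hmeas hweight]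
    _ = _ := by
        rw [ENNReal.coe_mul, ENNReal.ofNNReal_toNNReal]
        ring

end Carleson

/-- Sufficiency in the characterization of k-Fock-Carleson measures:
if sup_z μ(B(z,r))(1+|z|²)^k < ∞ for some r > 0 then
∫ |f^{(k)}|² e^{-|z|²} dμ ≤ ϖ ‖f‖²_{F²} for all f ∈ F². -/
theorem kFC_measure_sufficient (μ : Measure ℂ) (k : ℕ) (r : ℝ) (hr : 0 < r)
    (M : ℝ)
    (hM : ∀ z : ℂ, μ (Metric.ball z r) * ENNReal.ofReal ((1 + ‖z‖ ^ 2) ^ k) ≤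
      ENNReal.ofReal M) :
    ∃ ϖ : ℝ, ∀ f : ℂ → ℂ, MemFock f →
      ∫⁻ z, ENNReal.ofReal (‖iteratedDeriv k f z‖ ^ 2 * Real.exp (-‖z‖ ^ 2)) ∂μ ≤
        ENNReal.ofReal (ϖ * fockNormSq f) := by
  obtain ⟨C, hC⟩ := exists_lintegral_fockIntegrand_iteratedDeriv_le k hr
  have hball (z : ℂ) : μ (ball z r) < ⊤ :=
    ENNReal.lt_top_of_mul_ne_top_left ((hM z).trans_lt ENNReal.ofReal_lt_top).ne
      (ENNReal.ofReal_pos.2 (by positivity)).ne'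
  have : IsLocallyFiniteMeasure μ := ⟨fun z ↦ ⟨ball z r, ball_mem_nhds z hr, hball z⟩⟩
  refine ⟨C * π * M, fun f hf ↦ ?_⟩
  have hnorm : 0 ≤ fockNormSq f := fockNormSq_nonneg f
  calc ∫⁻ z, ENNReal.ofReal (fockIntegrand (iteratedDeriv k f) z) ∂μ
      ≤ C * ENNReal.ofReal M * ∫⁻ u, ENNReal.ofReal (fockIntegrand f u) := hC μ _ hM f hf.1
    _ = ENNReal.ofReal C * ENNReal.ofReal (π * fockNormSq f) * ENNReal.ofReal M := by
        rw [hf.lintegral_fockIntegrand, ENNReal.ofReal_coe_nnreal, mul_right_comm]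
    _ = ENNReal.ofReal (C * π * M * fockNormSq f) := by
        rw [← ENNReal.ofReal_mul (by positivity), ← ENNReal.ofReal_mul (by positivity)]
        ring_nf
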